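/- arXiv:2301.13566 — 3 statements merged into one kernel-verified Lean document; each statement's English description precedes it below -/
import Mathlib

section
/- Let S be a stable set of n-cbc and let (P,Q) be a border of S. Then for all k_1, k_2 ∈ [n) and all X, Y ∈ S, the three pairs (P, L_{k_2}^n(Y a^Q)), (R_{k_1}^n(a^P X), L_{k_2}^n(Y a^Q)), and (R_{k_1}^n(a^P X), Q) are factorizations of size n and are borders of S. -/
/-!
Fix `k` and put `L = L_k^n(Y a^Q)`. The border map of `Y` is a bijection onto `(ℤ/n)²`; restricted
to the fibre of second coordinate `k` it says exactly that `(P, L)` is a factorization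
(`IsBorder.isIntFactorization_left`), so `|P| |L| = n`.

To see that `(P, L)` borders `Z ∈ S`, it is then enough, since `|P| |Z| |L| = n²`, to show that its
border map is surjective (`isBorder_of_surjective`). A class `(c, r)` is reached as follows: the
composition `Z ∘_r Y` is in `S`, hence is bordered by `(P, Q)`, and hitting `(c, k)` with its border
map gives `a^i b a^j ∈ Z` and `a^m b a^l ∈ Y` with `j + m ≡ r`, `p + i ≡ c` and `l + q ≡ k`; the
last congruence means `m mod n ∈ L`. This is `BordersFamily.left`.

The mirror argument, with `X ∘_r Z`, treats `(R_k^n(a^P X), Q)`. The mixed pair is obtained by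
applying the mirror argument to the border `(P, L)` of `S` in place of `(P, Q)`.
-/

namespace CBC

variable {A : Type*}

/-- `a^i` -/
def apow (a : A) (i : ℕ) : FreeMonoid A := (FreeMonoid.of a) ^ i

/-- the bayonet word `a^i b a^j` -/
def bay (a b : A) (i j : ℕ) : FreeMonoid A := apow a i * FreeMonoid.of b * apow a j

/-- `X` is a (variable-length) code -/
def IsCode (X : Set (FreeMonoid A)) : Prop :=
  ∀ l m : List (FreeMonoid A), (∀ w ∈ l, w ∈ X) → (∀ w ∈ m, w ∈ X) →
    l.prod = m.prod → l = m

/-- `X` is a maximal code -/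
def IsMaximalCode (X : Set (FreeMonoid A)) : Prop :=
  IsCode X ∧ ∀ Y : Set (FreeMonoid A), IsCode Y → X ⊆ Y → Y = X

/-- a bayonet code : a code included in `a^* b a^*` -/
def IsBayonetCode (a b : A) (Y : Set (FreeMonoid A)) : Prop :=
  (∀ w ∈ Y, ∃ i j : ℕ, w = bay a b i j) ∧ IsCode Y

/-- an `n`-complete bayonet code -/
def IsCbc (a b : A) (n : ℕ) (X : Set (FreeMonoid A)) : Prop :=
  (∀ w ∈ X, ∃ i < n, ∃ j < n, w = bay a b i j) ∧ X.ncard = n ∧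
    IsCode (insert (apow a n) X)

/-- the composition `X ∘_r Y` -/
def comp (a b : A) (n r : ℕ) (X Y : Set (FreeMonoid A)) : Set (FreeMonoid A) :=
  { w | ∃ i j k l : ℕ, bay a b i j ∈ X ∧ bay a b k l ∈ Y ∧ (j + k) % n = r ∧
        w = bay a b i l }

/-- iterated composition `X ∘_{r₁} X₁ ∘_{r₂} ⋯ ∘_{r_k} X_k` -/
def compList (a b : A) (n : ℕ) (X : Set (FreeMonoid A))
    (rest : List (ℕ × Set (FreeMonoid A))) : Set (FreeMonoid A) :=
  rest.foldl (fun acc p => comp a b n p.1 acc p.2) X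

/-- a compatible set of `n`-cbc -/
def Compatible (a b : A) (n : ℕ) (E : Set (Set (FreeMonoid A))) : Prop :=
  ∀ X ∈ E, ∀ rest : List (ℕ × Set (FreeMonoid A)),
    (∀ p ∈ rest, p.1 < n ∧ p.2 ∈ E) → IsCbc a b n (compList a b n X rest)

/-- a stable set of `n`-cbc -/
def StableSet (a b : A) (n : ℕ) (S : Set (Set (FreeMonoid A))) : Prop :=
  (∀ X ∈ S, IsCbc a b n X) ∧ ∀ X ∈ S, ∀ Y ∈ S, ∀ r < n, comp a b n r X Y ∈ S

/-- `E^∘`, the smallest stable set containing `E` -/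
def stableClosure (a b : A) (n : ℕ) (E : Set (Set (FreeMonoid A))) :
    Set (Set (FreeMonoid A)) :=
  ⋂₀ { S | StableSet a b n S ∧ E ⊆ S }

/-- `(P,Q)` is a border of the `n`-cbc `X` : the map
`P × X × Q → (ZMod n)²`, `(p, a^i b a^j, q) ↦ (p + i, j + q)` is a bijection. -/
def IsBorder (a b : A) (n : ℕ) (P Q : Set ℤ) (X : Set (FreeMonoid A)) : Prop :=
  ∀ c : ZMod n × ZMod n, ∃! t : ℤ × (ℕ × ℕ) × ℤ,
    t.1 ∈ P ∧ bay a b t.2.1.1 t.2.1.2 ∈ X ∧ t.2.2 ∈ Q ∧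
    (t.1 : ZMod n) + (t.2.1.1 : ZMod n) = c.1 ∧
    (t.2.1.2 : ZMod n) + (t.2.2 : ZMod n) = c.2

/-- `(P,Q)` is a border of every element of `E` -/
def BordersFamily (a b : A) (n : ℕ) (P Q : Set ℤ)
    (E : Set (Set (FreeMonoid A))) : Prop :=
  ∀ X ∈ E, IsBorder a b n P Q X

def toZ (S : Set ℕ) : Set ℤ := (fun i : ℕ => (i : ℤ)) '' S

def toZModN (n : ℕ) (S : Set ℕ) : Set (ZMod n) := (fun i : ℕ => (i : ZMod n)) '' S

def toZModZ (n : ℕ) (S : Set ℤ) : Set (ZMod n) := (fun i : ℤ => (i : ZMod n)) '' S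

/-- `(P,Q)` is a factorization of size `n` -/
def IsFactorization (n : ℕ) (P Q : Set (ZMod n)) : Prop :=
  ∀ c : ZMod n, ∃! pq : ZMod n × ZMod n, pq.1 ∈ P ∧ pq.2 ∈ Q ∧ pq.1 + pq.2 = c

/-- `L_k^n(Y)` -/
def Lset (a b : A) (n : ℕ) (Y : Set (FreeMonoid A)) (k : ℕ) : Set ℕ :=
  { i | ∃ i' j' : ℕ, bay a b i' j' ∈ Y ∧ i' % n = i ∧ j' % n = k }

/-- `R_k^n(Y)` -/
def Rset (a b : A) (n : ℕ) (Y : Set (FreeMonoid A)) (k : ℕ) : Set ℕ :=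
  { j | ∃ i' j' : ℕ, bay a b i' j' ∈ Y ∧ i' % n = k ∧ j' % n = j }

/-- `L(Y)` -/
def Lfull (a b : A) (n : ℕ) (Y : Set (FreeMonoid A)) : Set ℕ :=
  { i | ∃ i' j' : ℕ, bay a b i' j' ∈ Y ∧ i' % n = i }

/-- `R(Y)` -/
def Rfam (a b : A) (n : ℕ) (Y : Set (FreeMonoid A)) : Set (Set ℕ) :=
  { R | ∃ k ∈ Lfull a b n Y, R = Rset a b n Y k }

/-- the `n`-cbc `X` borders the set `E` -/
def CbcBorders (a b : A) (n : ℕ) (X : Set (FreeMonoid A))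
    (E : Set (Set (FreeMonoid A))) : Prop :=
  ∀ R ∈ Rfam a b n X,
    IsFactorization n (toZModN n R) (toZModN n (Lfull a b n X)) ∧
    BordersFamily a b n (toZ R) (toZ (Lfull a b n X)) E

/-- `R_k^n(a^P X)` -/
def RsetShift (a b : A) (n : ℕ) (P : Set ℤ) (X : Set (FreeMonoid A)) (k : ℕ) :
    Set ℕ :=
  { j | j < n ∧ ∃ (p : ℤ) (i' j' : ℕ), p ∈ P ∧ bay a b i' j' ∈ X ∧
        ((p + (i' : ℤ) : ℤ) : ZMod n) = (k : ZMod n) ∧ j' % n = j }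

/-- `L_k^n(Y a^Q)` -/
def LsetShift (a b : A) (n : ℕ) (Y : Set (FreeMonoid A)) (Q : Set ℤ) (k : ℕ) :
    Set ℕ :=
  { i | i < n ∧ ∃ (i' j' : ℕ) (q : ℤ), q ∈ Q ∧ bay a b i' j' ∈ Y ∧
        i' % n = i ∧ (((j' : ℤ) + q : ℤ) : ZMod n) = (k : ZMod n) }

/-- `H_t(X)`, for `X ⊆ { a^i b a^j : i, j ∈ [n) }` -/
def Hfam (a b : A) (n t : ℕ) (X : Set (FreeMonoid A)) : Set (Set (FreeMonoid A)) :=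
  { Y | ∃ f : ℕ → ℕ → ℕ → ℕ, (∀ i j s, f i j s < t) ∧
      Y = { w | ∃ i j s : ℕ, bay a b i j ∈ X ∧ s < t ∧
                w = bay a b (i + f i j s * n) (j + s * n) } }

/-- `E' ∈ ℋ_t(E)` -/
def HfamSet (a b : A) (n t : ℕ) (E E' : Set (Set (FreeMonoid A))) : Prop :=
  (∀ Y ∈ E', ∃ X ∈ E, Y ∈ Hfam a b n t X) ∧
  (∀ X ∈ E, ∃ Y ∈ E', Y ∈ Hfam a b n t X)

/-- the dual `X̃` of a bayonet code -/
def dual (a b : A) (X : Set (FreeMonoid A)) : Set (FreeMonoid A) :=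
  { w | ∃ i j : ℕ, bay a b i j ∈ X ∧ w = bay a b j i }

/-- a set `E` of `n`-cbc is of Hajós -/
def IsHajos (a b : A) (n : ℕ) (E : Set (Set (FreeMonoid A))) : Prop :=
  ∃ (k : ℕ) (ts : ℕ → ℕ) (Ys : ℕ → Set (FreeMonoid A)),
    (∀ i, 1 ≤ i → i ≤ k → 1 < ts i) ∧
    (∏ i ∈ Finset.Icc 1 k, ts i) = n ∧
    Ys 0 = {FreeMonoid.of b} ∧
    (∀ i, i ≤ k - 1 → IsBayonetCode a b (Ys i)) ∧
    (∀ i, 1 ≤ i → i ≤ k - 1 →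
      dual a b (Ys i) ∈ Hfam a b (∏ j ∈ Finset.Icc 1 (i - 1), ts j) (ts i) (Ys (i - 1))) ∧
    (if k = 0 then ∀ Y ∈ E, Y = ({FreeMonoid.of b} : Set (FreeMonoid A))
     else
       (∀ Y ∈ E, Y ∈ Hfam a b (∏ j ∈ Finset.Icc 1 (k - 1), ts j) (ts k) (Ys (k - 1))) ∨
       (∀ Y ∈ E, dual a b Y ∈ Hfam a b (∏ j ∈ Finset.Icc 1 (k - 1), ts j) (ts k) (Ys (k - 1))))

/-- a Krasner factorization of size `n` -/
def IsKrasner (n : ℕ) (P Q : Set ℕ) : Prop :=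
  P.Finite ∧ Q.Finite ∧ P.ncard * Q.ncard = n ∧ ∀ k < n, ∃ p ∈ P, ∃ q ∈ Q, k = p + q

/-- `C_M(ω) = { a^{i mod n} b a^{j mod n} : a^i ω a^j ∈ M^* }` -/
def Cword (a b : A) (n : ℕ) (M : Set (FreeMonoid A)) (ω : FreeMonoid A) :
    Set (FreeMonoid A) :=
  { w | ∃ i j : ℕ, apow a i * ω * apow a j ∈ Submonoid.closure M ∧
        w = bay a b (i % n) (j % n) }

/-! ### Factorizations by sets of integers -/

/-- `(P, Q)` is a factorization of size `n`, expressed on the integer representatives: every class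
modulo `n` is the class of `p + q` for exactly one `(p, q) ∈ P × Q`. In particular both sets
reduce injectively modulo `n`. -/
def IsIntFactorization (n : ℕ) (P Q : Set ℤ) : Prop :=
  ∀ c : ZMod n, ∃! pq : ℤ × ℤ, pq.1 ∈ P ∧ pq.2 ∈ Q ∧ (pq.1 : ZMod n) + (pq.2 : ZMod n) = c

theorem IsIntFactorization.isFactorization {n : ℕ} {P Q : Set ℤ}
    (h : IsIntFactorization n P Q) : IsFactorization n (toZModZ n P) (toZModZ n Q) := by
  intro c
  obtain ⟨⟨p, q⟩, ⟨hp, hq, hc⟩, huniq⟩ := h c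
  refine ⟨((p : ZMod n), (q : ZMod n)), ⟨⟨p, hp, rfl⟩, ⟨q, hq, rfl⟩, hc⟩, ?_⟩
  rintro ⟨_, _⟩ ⟨⟨p', hp', rfl⟩, ⟨q', hq', rfl⟩, hc'⟩
  have h' := huniq (p', q') ⟨hp', hq', hc'⟩
  simp only [Prod.mk.injEq] at h'
  simp [h'.1, h'.2]

theorem IsIntFactorization.card {n : ℕ} {P Q : Set ℤ}
    (h : IsIntFactorization n P Q) : Nat.card P * Nat.card Q = n := by
  rw [← Nat.card_prod]
  conv_rhs => rw [← Nat.card_zmod n]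
  refine Nat.card_eq_of_bijective
    (fun pq : P × Q => ((pq.1 : ℤ) : ZMod n) + ((pq.2 : ℤ) : ZMod n)) ⟨?_, ?_⟩
  · rintro ⟨⟨p, hp⟩, q, hq⟩ ⟨⟨p', hp'⟩, q', hq'⟩ heq
    have := (h _).unique (y₁ := (p, q)) (y₂ := (p', q')) ⟨hp, hq, heq⟩ ⟨hp', hq', rfl⟩
    simpa using this
  · intro c
    obtain ⟨⟨p, q⟩, ⟨hp, hq, hc⟩, -⟩ := h c
    exact ⟨(⟨p, hp⟩, ⟨q, hq⟩), hc⟩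

theorem toZModN_eq_toZModZ_toZ (n : ℕ) (S : Set ℕ) : toZModN n S = toZModZ n (toZ S) := by
  simp [toZModN, toZModZ, toZ, Set.image_image]

/-! ### Bayonet words and surjectivity of border maps -/

theorem toList_apow (a : A) (i : ℕ) :
    FreeMonoid.toList (apow a i) = List.replicate i a := by
  induction i with
  | zero => simp [apow]
  | succ i ih =>
    simp only [apow] at ih
    simp [apow, pow_succ, FreeMonoid.toList_mul, ih, List.replicate_succ']

theorem bay_injective {a b : A} (hab : a ≠ b) :
    Function.Injective (fun x : ℕ × ℕ => bay a b x.1 x.2) := by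
  rintro ⟨i, j⟩ ⟨k, l⟩ h
  have h' := congrArg FreeMonoid.toList h
  simp only [bay, FreeMonoid.toList_mul, toList_apow, FreeMonoid.toList_of,
    List.append_assoc, List.singleton_append] at h'
  induction i generalizing k with
  | zero =>
    cases k with
    | zero => simpa using h'
    | succ k => simp [List.replicate_succ, hab.symm] at h'
  | succ i ih =>
    cases k with
    | zero => simp [List.replicate_succ, hab] at h'
    | succ k =>
      simp only [List.replicate_succ, List.cons_append, List.cons.injEq, true_and] at h'
      have hb : bay a b i j = bay a b k l := by
        apply FreeMonoid.toList.injective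
        simpa [bay, FreeMonoid.toList_mul, toList_apow] using h'
      simpa using ih k hb h'

theorem IsCbc.card_exponents {a b : A} (hab : a ≠ b) {n : ℕ} {X : Set (FreeMonoid A)}
    (hX : IsCbc a b n X) : Nat.card {x : ℕ × ℕ | bay a b x.1 x.2 ∈ X} = n := by
  have himg : (fun x : ℕ × ℕ => bay a b x.1 x.2) '' {x : ℕ × ℕ | bay a b x.1 x.2 ∈ X} = X := by
    ext w
    constructor
    · rintro ⟨x, hx, rfl⟩
      exact hx
    · intro hw
      obtain ⟨i, -, j, -, rfl⟩ := hX.1 w hw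
      exact ⟨(i, j), hw, rfl⟩
  rw [Nat.card_coe_set_eq, ← Set.ncard_image_of_injective _ (bay_injective hab), himg, hX.2.1]

/-- For a factorization `(P, Q)` and an `n`-cbc `Z`, the set `P × Z × Q` has `n²` elements, so it
suffices to check that the border map is surjective. -/
theorem isBorder_of_surjective {a b : A} (hab : a ≠ b) {n : ℕ} (hn : 1 ≤ n) {P Q : Set ℤ}
    {Z : Set (FreeMonoid A)} (hZ : IsCbc a b n Z) (hPQ : IsIntFactorization n P Q)
    (hsurj : ∀ c d : ZMod n, ∃ p ∈ P, ∃ i j : ℕ, bay a b i j ∈ Z ∧ ∃ q ∈ Q,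
      (p : ZMod n) + (i : ZMod n) = c ∧ (j : ZMod n) + (q : ZMod n) = d) :
    IsBorder a b n P Q Z := by
  have : NeZero n := ⟨by omega⟩
  have hcard := hPQ.card
  have hcardZ := hZ.card_exponents hab
  have hpos : 0 < Nat.card P * Nat.card Q := by omega
  have : Finite P := Nat.finite_of_card_ne_zero (Nat.pos_of_mul_pos_right hpos).ne'
  have : Finite Q := Nat.finite_of_card_ne_zero (Nat.pos_of_mul_pos_left hpos).ne'
  have : Finite {x : ℕ × ℕ | bay a b x.1 x.2 ∈ Z} :=
    Nat.finite_of_card_ne_zero (by rw [hcardZ]; omega)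
  let f : P × {x : ℕ × ℕ | bay a b x.1 x.2 ∈ Z} × Q → ZMod n × ZMod n := fun t =>
    (((t.1 : ℤ) : ZMod n) + ((t.2.1.1.1 : ℕ) : ZMod n),
      ((t.2.1.1.2 : ℕ) : ZMod n) + ((t.2.2 : ℤ) : ZMod n))
  have hf : Function.Surjective f := by
    rintro ⟨c, d⟩
    obtain ⟨p, hp, i, j, hij, q, hq, hc, hd⟩ := hsurj c d
    exact ⟨(⟨p, hp⟩, ⟨(i, j), hij⟩, ⟨q, hq⟩), Prod.ext hc hd⟩
  have hbij : Function.Bijective f := by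
    refine hf.bijective_of_nat_card_le (le_of_eq ?_)
    rw [Nat.card_prod, Nat.card_prod, Nat.card_prod, Nat.card_zmod, hcardZ]
    calc Nat.card P * (n * Nat.card Q) = n * (Nat.card P * Nat.card Q) := by ring
      _ = n * n := by rw [hcard]
  rintro ⟨c, d⟩
  obtain ⟨p, hp, i, j, hij, q, hq, hc, hd⟩ := hsurj c d
  refine ⟨(p, (i, j), q), ⟨hp, hij, hq, hc, hd⟩, ?_⟩
  rintro ⟨p', ⟨i', j'⟩, q'⟩ ⟨hp', hij', hq', hc', hd'⟩
  have := @hbij.1 (⟨p', hp'⟩, ⟨(i', j'), hij'⟩, ⟨q', hq'⟩) (⟨p, hp⟩, ⟨(i, j), hij⟩, ⟨q, hq⟩)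
    (Prod.ext (hc'.trans hc.symm) (hd'.trans hd.symm))
  simpa using this

/-! ### Fibres of border maps and compositions -/

theorem mem_toZ_LsetShift {a b : A} {n : ℕ} (hn : 1 ≤ n) {Y : Set (FreeMonoid A)} {Q : Set ℤ}
    {k : ℕ} {z : ℤ} : z ∈ toZ (LsetShift a b n Y Q k) ↔
      ∃ (i j : ℕ) (q : ℤ), q ∈ Q ∧ bay a b i j ∈ Y ∧ ((i % n : ℕ) : ℤ) = z ∧
        (j : ZMod n) + (q : ZMod n) = (k : ZMod n) := by
  constructor
  · rintro ⟨_, ⟨-, i, j, q, hq, hY, rfl, hk⟩, rfl⟩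
    exact ⟨i, j, q, hq, hY, rfl, by simpa using hk⟩
  · rintro ⟨i, j, q, hq, hY, rfl, hk⟩
    exact ⟨i % n, ⟨Nat.mod_lt _ hn, i, j, q, hq, hY, rfl, by simpa using hk⟩, rfl⟩

theorem mem_toZ_RsetShift {a b : A} {n : ℕ} (hn : 1 ≤ n) {X : Set (FreeMonoid A)} {P : Set ℤ}
    {k : ℕ} {z : ℤ} : z ∈ toZ (RsetShift a b n P X k) ↔
      ∃ (p : ℤ) (i j : ℕ), p ∈ P ∧ bay a b i j ∈ X ∧
        (p : ZMod n) + (i : ZMod n) = (k : ZMod n) ∧ ((j % n : ℕ) : ℤ) = z := by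
  constructor
  · rintro ⟨_, ⟨-, p, i, j, hp, hX, hk, rfl⟩, rfl⟩
    exact ⟨p, i, j, hp, hX, by simpa using hk, rfl⟩
  · rintro ⟨p, i, j, hp, hX, hk, rfl⟩
    exact ⟨j % n, ⟨Nat.mod_lt _ hn, p, i, j, hp, hX, by simpa using hk, rfl⟩, rfl⟩

/-- The border map of `Y`, restricted to the fibre of second coordinate `k`, is the addition map
of `P` and `L_k^n(Y a^Q)`. -/
theorem IsBorder.isIntFactorization_left {a b : A} {n : ℕ} (hn : 1 ≤ n) {P Q : Set ℤ}
    {Y : Set (FreeMonoid A)} (hY : IsBorder a b n P Q Y) (k : ℕ) :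
    IsIntFactorization n P (toZ (LsetShift a b n Y Q k)) := by
  intro c
  obtain ⟨⟨p, ⟨i, j⟩, q⟩, ⟨hp, hij, hq, hc, hd⟩, huniq⟩ := hY (c, (k : ZMod n))
  refine ⟨(p, ((i % n : ℕ) : ℤ)),
    ⟨hp, (mem_toZ_LsetShift hn).2 ⟨i, j, q, hq, hij, rfl, hd⟩, by simpa using hc⟩, ?_⟩
  rintro ⟨p', z⟩ ⟨hp', hz, hc'⟩
  obtain ⟨i', j', q', hq', hij', rfl, hd'⟩ := (mem_toZ_LsetShift hn).1 hz
  have h := huniq (p', (i', j'), q') ⟨hp', hij', hq', by simpa using hc', hd'⟩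
  simp only [Prod.mk.injEq] at h
  simp [h.1, h.2.1.1]

/-- The mirror image of `IsBorder.isIntFactorization_left`: the fibre of first coordinate `k`. -/
theorem IsBorder.isIntFactorization_right {a b : A} {n : ℕ} (hn : 1 ≤ n) {P Q : Set ℤ}
    {X : Set (FreeMonoid A)} (hX : IsBorder a b n P Q X) (k : ℕ) :
    IsIntFactorization n (toZ (RsetShift a b n P X k)) Q := by
  intro c
  obtain ⟨⟨p, ⟨i, j⟩, q⟩, ⟨hp, hij, hq, hc, hd⟩, huniq⟩ := hX ((k : ZMod n), c)
  refine ⟨(((j % n : ℕ) : ℤ), q),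
    ⟨(mem_toZ_RsetShift hn).2 ⟨p, i, j, hp, hij, hc, rfl⟩, hq, by simpa using hd⟩, ?_⟩
  rintro ⟨z, q'⟩ ⟨hz, hq', hd'⟩
  obtain ⟨p', i', j', hp', hij', hc', rfl⟩ := (mem_toZ_RsetShift hn).1 hz
  have h := huniq (p', (i', j'), q') ⟨hp', hij', hq', hc', by simpa using hd'⟩
  simp only [Prod.mk.injEq] at h
  simp [h.2.2, h.2.1.2]

/-- Surjectivity of the border map of `X ∘_r Y`, which belongs to `S`, with the words of the
composition unfolded into a word `a^i b a^j` of `X` and a word `a^k b a^l` of `Y`. -/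
theorem exists_of_borders_comp {a b : A} (hab : a ≠ b) {n : ℕ} (hn : 1 ≤ n)
    {S : Set (Set (FreeMonoid A))} (hS : StableSet a b n S) {P Q : Set ℤ}
    (hb : BordersFamily a b n P Q S) {X Y : Set (FreeMonoid A)} (hX : X ∈ S) (hY : Y ∈ S)
    (r c d : ZMod n) :
    ∃ p ∈ P, ∃ i j k l : ℕ, ∃ q ∈ Q, bay a b i j ∈ X ∧ bay a b k l ∈ Y ∧
      (j : ZMod n) + (k : ZMod n) = r ∧ (p : ZMod n) + (i : ZMod n) = c ∧
      (l : ZMod n) + (q : ZMod n) = d := by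
  have : NeZero n := ⟨by omega⟩
  obtain ⟨⟨p, ⟨i, l⟩, q⟩, ⟨hp, hw, hq, hc, hd⟩, -⟩ :=
    hb _ (hS.2 X hX Y hY r.val (ZMod.val_lt r)) (c, d)
  obtain ⟨i', j, k, l', hiX, hlY, hr, heq⟩ := hw
  have hil := bay_injective hab (a₁ := (i, l)) (a₂ := (i', l')) heq
  simp only [Prod.mk.injEq] at hil
  obtain ⟨rfl, rfl⟩ := hil
  refine ⟨p, hp, i, j, k, l, q, hq, hiX, hlY, ?_, hc, hd⟩
  have := congrArg (Nat.cast : ℕ → ZMod n) hr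
  simpa using this

theorem BordersFamily.left {a b : A} (hab : a ≠ b) {n : ℕ} (hn : 1 ≤ n)
    {S : Set (Set (FreeMonoid A))} (hS : StableSet a b n S) {P Q : Set ℤ}
    (hb : BordersFamily a b n P Q S) {Y : Set (FreeMonoid A)} (hY : Y ∈ S) (k : ℕ) :
    BordersFamily a b n P (toZ (LsetShift a b n Y Q k)) S := by
  intro Z hZ
  refine isBorder_of_surjective hab hn (hS.1 Z hZ) ((hb Y hY).isIntFactorization_left hn k) ?_
  intro c r
  obtain ⟨p, hp, i, j, m, l, q, hq, hijZ, hmlY, hr, hc, hd⟩ :=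
    exists_of_borders_comp hab hn hS hb hZ hY r c (k : ZMod n)
  exact ⟨p, hp, i, j, hijZ, ((m % n : ℕ) : ℤ),
    (mem_toZ_LsetShift hn).2 ⟨m, l, q, hq, hmlY, rfl, hd⟩, hc, by simpa using hr⟩

theorem BordersFamily.right {a b : A} (hab : a ≠ b) {n : ℕ} (hn : 1 ≤ n)
    {S : Set (Set (FreeMonoid A))} (hS : StableSet a b n S) {P Q : Set ℤ}
    (hb : BordersFamily a b n P Q S) {X : Set (FreeMonoid A)} (hX : X ∈ S) (k : ℕ) :
    BordersFamily a b n (toZ (RsetShift a b n P X k)) Q S := by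
  intro Z hZ
  refine isBorder_of_surjective hab hn (hS.1 Z hZ) ((hb X hX).isIntFactorization_right hn k) ?_
  intro r d
  obtain ⟨p, hp, i, j, m, l, q, hq, hijX, hmlZ, hr, hc, hd⟩ :=
    exists_of_borders_comp hab hn hS hb hX hZ r (k : ZMod n) d
  exact ⟨((j % n : ℕ) : ℤ), (mem_toZ_RsetShift hn).2 ⟨p, i, j, hp, hijX, hc, rfl⟩,
    m, l, hmlZ, q, hq, by simpa using hr, hd⟩

theorem statement7 (a b : A) (hab : a ≠ b) (n : ℕ) (hn : 1 ≤ n)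
    (S : Set (Set (FreeMonoid A))) (hS : StableSet a b n S)
    (P Q : Set ℤ) (hP : P.Finite) (hQ : Q.Finite)
    (hb : BordersFamily a b n P Q S)
    (k₁ k₂ : ℕ) (hk₁ : k₁ < n) (hk₂ : k₂ < n)
    (X Y : Set (FreeMonoid A)) (hX : X ∈ S) (hY : Y ∈ S) :
    (IsFactorization n (toZModZ n P) (toZModN n (LsetShift a b n Y Q k₂)) ∧
       BordersFamily a b n P (toZ (LsetShift a b n Y Q k₂)) S) ∧
    (IsFactorization n (toZModN n (RsetShift a b n P X k₁))
        (toZModN n (LsetShift a b n Y Q k₂)) ∧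
       BordersFamily a b n (toZ (RsetShift a b n P X k₁))
        (toZ (LsetShift a b n Y Q k₂)) S) ∧
    (IsFactorization n (toZModN n (RsetShift a b n P X k₁)) (toZModZ n Q) ∧
       BordersFamily a b n (toZ (RsetShift a b n P X k₁)) Q S) := by
  have hL := hb.left hab hn hS hY k₂
  simp only [toZModN_eq_toZModZ_toZ]
  exact ⟨⟨((hb Y hY).isIntFactorization_left hn k₂).isFactorization, hL⟩,
    ⟨((hL X hX).isIntFactorization_right hn k₁).isFactorization, hL.right hab hn hS hX k₁⟩,
    ⟨((hb X hX).isIntFactorization_right hn k₁).isFactorization, hb.right hab hn hS hX k₁⟩⟩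

end CBC
end

section
/- Let M be a finite maximal code with a^n ∈ M and suppose M satisfies the factorization conjecture: there exist finite sets P, S ⊆ A* such that every word w ∈ A* admits a unique triple (p, m, s) ∈ P × M* × S with w = p m s. Then there is a Krasner factorization of size n that is a border of the set 𝒞_M := { C_M(ω) : ω ∈ A* }. -/
/-!
Take `P₀ = {i | a^i ∈ P}` and `Q₀ = {j | a^j ∈ S}`.

Since `M` is a code containing `a^n`, the powers of `a` in `M*` are exactly the powers of `a^n`
(`dvd_of_apow_mem`, `apow_mul_mem`). Factoring `a^k` with `k < n` as `p m s` thus forces `m = 1`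
and gives `k = i + j` with `i ∈ P₀`, `j ∈ Q₀`.

For the border property, pick representatives `k`, `l` of the two given residues which exceed the
lengths of all words of `P` and `S`. In the factorization `a^k ω a^l = p m s`, the words `p` and
`s` are then powers `a^i`, `a^j`, and `m = a^(k-i) ω a^(l-j) ∈ M*` (`split_apow`): this provides a
preimage. Conversely, two preimages of the same pair of residues give, after multiplying the
middle factors on both sides by suitable powers of `a^n`, two factorizations of one word
`a^k ω a^l`, so uniqueness of the factorization identifies them. The case `ω = 1` of this
uniqueness also shows that the sums `i + j` are distinct modulo `n`, whence `|P₀| |Q₀| = n`.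
-/

namespace CBC

variable {A : Type*}

/-! ### Powers of `a` and bayonet words -/

theorem apow_add (a : A) (i j : ℕ) : apow a (i + j) = apow a i * apow a j := pow_add _ _ _

theorem length_apow (a : A) (i : ℕ) : (apow a i).length = i := by
  change (FreeMonoid.toList (apow a i)).length = i
  rw [toList_apow, List.length_replicate]

theorem apow_injective (a : A) : Function.Injective (apow a) := fun i j h => by
  rw [← length_apow a i, h, length_apow]

theorem mul_inj_of_length {x y x' y' : FreeMonoid A} (h : x * y = x' * y')
    (hl : x.length = x'.length) : x = x' ∧ y = y' :=
  List.append_inj (s₁ := FreeMonoid.toList x) (t₁ := FreeMonoid.toList y)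
    (s₂ := FreeMonoid.toList x') (t₂ := FreeMonoid.toList y') h hl

theorem mul_inj_of_length' {x y x' y' : FreeMonoid A} (h : x * y = x' * y')
    (hl : y.length = y'.length) : x = x' ∧ y = y' :=
  List.append_inj' (s₁ := FreeMonoid.toList x) (t₁ := FreeMonoid.toList y)
    (s₂ := FreeMonoid.toList x') (t₂ := FreeMonoid.toList y') h hl

theorem bay_inj {a b : A} (hab : a ≠ b) {i j i' j' : ℕ} (h : bay a b i j = bay a b i' j') :
    i = i' ∧ j = j' := by
  have key : ∀ i i' j j' : ℕ, List.replicate i a ++ b :: List.replicate j a =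
      List.replicate i' a ++ b :: List.replicate j' a → i = i' ∧ j = j' := by
    intro i
    induction i with
    | zero =>
      intro i' j j' h
      cases i' with
      | zero => simpa using h
      | succ k =>
        simp only [List.replicate_succ, List.replicate_zero, List.nil_append, List.cons_append,
          List.cons.injEq] at h
        exact absurd h.1.symm hab
    | succ m ih =>
      intro i' j j' h
      cases i' with
      | zero =>
        simp only [List.replicate_succ, List.replicate_zero, List.nil_append, List.cons_append,
          List.cons.injEq] at h
        exact absurd h.1 hab
      | succ k =>
        simp only [List.replicate_succ, List.cons_append, List.cons.injEq, true_and] at h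
        obtain ⟨h1, h2⟩ := ih k j j' h
        exact ⟨by rw [h1], h2⟩
  apply key
  have := congrArg FreeMonoid.toList h
  simpa [bay, FreeMonoid.toList_mul, toList_apow, FreeMonoid.toList_of] using this

/-- The initial factor of length `|p|` and the final factor of length `|s|` of `a^k ω a^l` are
powers of `a` as soon as `|p| ≤ k` and `|s| ≤ l`. -/
theorem split_apow (a : A) (k l : ℕ) (ω p m s : FreeMonoid A)
    (h : apow a k * ω * apow a l = p * m * s) (hp : p.length ≤ k) (hs : s.length ≤ l) :
    p = apow a p.length ∧ s = apow a s.length ∧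
      m = apow a (k - p.length) * ω * apow a (l - s.length) := by
  have e1 : apow a k = apow a p.length * apow a (k - p.length) := by
    rw [← apow_add]; congr 1; omega
  have e2 : apow a l = apow a (l - s.length) * apow a s.length := by
    rw [← apow_add]; congr 1; omega
  have h' : apow a p.length * ((apow a (k - p.length) * ω * apow a (l - s.length)) *
      apow a s.length) = p * (m * s) := by
    rw [e1, e2] at h
    simpa only [mul_assoc] using h
  obtain ⟨h1, h2⟩ := mul_inj_of_length h' (length_apow a _)
  obtain ⟨h3, h4⟩ := mul_inj_of_length' h2 (length_apow a _)
  exact ⟨h1.symm, h4.symm, h3.symm⟩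

theorem factors_apow {a : A} {k : ℕ} {p m s : FreeMonoid A} (h : apow a k = p * m * s) :
    p = apow a p.length ∧ m = apow a m.length ∧ s = apow a s.length ∧
      k = p.length + m.length + s.length := by
  have hl := congrArg FreeMonoid.length h
  rw [length_apow, FreeMonoid.length_mul, FreeMonoid.length_mul] at hl
  have h' := congrArg FreeMonoid.toList h
  rw [toList_apow, FreeMonoid.toList_mul, FreeMonoid.toList_mul] at h'
  obtain ⟨-, h1, h3⟩ := List.append_eq_replicate_iff.1 h'.symm
  obtain ⟨-, h1, h2⟩ := List.append_eq_replicate_iff.1 h1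
  refine ⟨?_, ?_, ?_, hl⟩ <;> apply FreeMonoid.toList.injective <;> rw [toList_apow]
  · exact h1
  · exact h2
  · exact h3

/-! ### Powers of `a` in `M*` -/

/-- A power of `a` in `M*` is a power of `a^n`: a word of `M` written with the letter `a` only
commutes with `a^n`, hence equals it because `M` is a code. -/
theorem dvd_of_apow_mem {a : A} {n : ℕ} {M : Set (FreeMonoid A)} (hM : IsCode M)
    (han : apow a n ∈ M) {m : ℕ} (h : apow a m ∈ Submonoid.closure M) : n ∣ m := by
  have key : ∀ w ∈ Submonoid.closure M,
      (∀ x ∈ FreeMonoid.toList w, x = a) → n ∣ w.length := by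
    intro w hw
    induction hw using Submonoid.closure_induction with
    | mem w hw =>
      intro hx
      have hwa : w = apow a w.length := by
        apply FreeMonoid.toList.injective
        rw [toList_apow]
        exact List.eq_replicate_iff.2 ⟨rfl, hx⟩
      have hc := hM [w, apow a n] [apow a n, w] (by simp [hw, han]) (by simp [hw, han])
        (by
          simp only [List.prod_cons, List.prod_nil, mul_one]
          rw [hwa, ← apow_add, ← apow_add, add_comm])
      have hwn : w = apow a n := (List.cons.inj hc).1
      rw [hwn, length_apow]
    | one => intro _; exact dvd_zero n
    | mul x y _ _ ihx ihy =>
      intro hx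
      rw [FreeMonoid.length_mul]
      refine dvd_add (ihx fun z hz => hx z ?_) (ihy fun z hz => hx z ?_)
      · rw [FreeMonoid.toList_mul]; exact List.mem_append_left _ hz
      · rw [FreeMonoid.toList_mul]; exact List.mem_append_right _ hz
  have := key _ h (by
    rw [toList_apow]; intro x hx; exact List.eq_of_mem_replicate hx)
  rwa [length_apow] at this

theorem exists_add_mul_eq {n u v : ℕ} (h : u ≡ v [MOD n]) :
    ∃ x y : ℕ, u + n * x = v + n * y := by
  refine ⟨v / n, u / n, ?_⟩
  have h1 := Nat.mod_add_div u n
  have h2 := Nat.mod_add_div v n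
  have h3 : u % n = v % n := h
  omega

theorem apow_mul_mem {a : A} {n : ℕ} {M : Set (FreeMonoid A)} (han : apow a n ∈ M) (x : ℕ) :
    apow a (n * x) ∈ Submonoid.closure M := by
  have : apow a (n * x) = apow a n ^ x := by simp only [apow, pow_mul]
  rw [this]
  exact Submonoid.pow_mem _ (Submonoid.subset_closure han) x

/-! ### The Krasner border -/

theorem statement10 (a b : A) (hab : a ≠ b) (n : ℕ) (hn : 1 ≤ n)
    (M : Set (FreeMonoid A)) (hMfin : M.Finite) (hM : IsMaximalCode M)
    (han : apow a n ∈ M)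
    (P S : Set (FreeMonoid A)) (hPfin : P.Finite) (hSfin : S.Finite)
    (hfact : ∀ w : FreeMonoid A,
        ∃! t : FreeMonoid A × FreeMonoid A × FreeMonoid A,
          t.1 ∈ P ∧ t.2.1 ∈ Submonoid.closure M ∧ t.2.2 ∈ S ∧
          w = t.1 * t.2.1 * t.2.2) :
    ∃ P₀ Q₀ : Set ℕ, IsKrasner n P₀ Q₀ ∧
      ∀ ω : FreeMonoid A, IsBorder a b n (toZ P₀) (toZ Q₀) (Cword a b n M ω) := by
  have hfu : ∀ p ∈ P, ∀ s ∈ S, ∀ p' ∈ P, ∀ s' ∈ S, ∀ m ∈ Submonoid.closure M,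
      ∀ m' ∈ Submonoid.closure M, p * m * s = p' * m' * s' → p = p' ∧ s = s' := by
    intro p hp s hs p' hp' s' hs' m hm m' hm' h
    have := (hfact (p * m * s)).unique (y₁ := (p, m, s)) (y₂ := (p', m', s'))
      ⟨hp, hm, hs, rfl⟩ ⟨hp', hm', hs', h⟩
    simp only [Prod.mk.injEq] at this
    exact ⟨this.1, this.2.2⟩
  -- Congruent exponents become equal after inserting powers of `a^n` into the middle factor.
  have hborder : ∀ ω : FreeMonoid A, ∀ p q p' q' I J I' J' : ℕ,
      apow a p ∈ P → apow a q ∈ S → apow a p' ∈ P → apow a q' ∈ S →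
      apow a I * ω * apow a J ∈ Submonoid.closure M →
      apow a I' * ω * apow a J' ∈ Submonoid.closure M →
      p + I ≡ p' + I' [MOD n] → J + q ≡ J' + q' [MOD n] → p = p' ∧ q = q' := by
    intro ω p q p' q' I J I' J' hp hq hp' hq' hm hm' h1 h2
    obtain ⟨x, x', hx⟩ := exists_add_mul_eq h1
    obtain ⟨y, y', hy⟩ := exists_add_mul_eq h2
    have hmem : ∀ {I J : ℕ} (x y : ℕ), apow a I * ω * apow a J ∈ Submonoid.closure M →
        apow a (n * x) * (apow a I * ω * apow a J) * apow a (n * y) ∈ Submonoid.closure M :=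
      fun x y h => mul_mem (mul_mem (apow_mul_mem han x) h) (apow_mul_mem han y)
    have hw : ∀ p q I J x y : ℕ,
        apow a p * (apow a (n * x) * (apow a I * ω * apow a J) * apow a (n * y)) * apow a q =
          apow a (p + I + n * x) * ω * apow a (J + q + n * y) := by
      intro p q I J x y
      rw [show p + I + n * x = p + (n * x + I) by ring,
        show J + q + n * y = J + (n * y + q) by ring]
      simp only [apow_add, mul_assoc]
    have := hfu _ hp _ hq _ hp' _ hq' _ (hmem x y hm) _ (hmem x' y' hm')
      (by rw [hw, hw, hx, hy])
    exact ⟨apow_injective a this.1, apow_injective a this.2⟩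
  have hsum : ∀ k < n, ∃ p ∈ {i | apow a i ∈ P}, ∃ q ∈ {j | apow a j ∈ S}, k = p + q := by
    intro k hk
    obtain ⟨⟨p, m, s⟩, ⟨hp, hm, hs, e⟩, -⟩ := hfact (apow a k)
    simp only at hp hm hs e
    obtain ⟨e1, e2, e3, e4⟩ := factors_apow e
    rw [e1] at hp
    rw [e2] at hm
    rw [e3] at hs
    have h0 : m.length = 0 :=
      Nat.eq_zero_of_dvd_of_lt (dvd_of_apow_mem hM.1 han hm) (by omega)
    exact ⟨_, hp, _, hs, by omega⟩
  refine ⟨{i | apow a i ∈ P}, {j | apow a j ∈ S}, ⟨?_, ?_, ?_, ?_⟩, ?_⟩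
  · exact hPfin.preimage (apow_injective a).injOn
  · exact hSfin.preimage (apow_injective a).injOn
  · have hbij : Set.BijOn (fun t : ℕ × ℕ => (t.1 + t.2) % n)
        ({i | apow a i ∈ P} ×ˢ {j | apow a j ∈ S}) (Set.Iio n) := by
      refine ⟨fun t _ => Nat.mod_lt _ hn, ?_, ?_⟩
      · rintro ⟨p, q⟩ ⟨hp, hq⟩ ⟨p', q'⟩ ⟨hp', hq'⟩ h
        -- `a^q · 1 · a^((n-1)q)` is a power of `a^n` and completes `q` to a multiple of `n`.
        have hm : ∀ q : ℕ, apow a q * 1 * apow a ((n - 1) * q) ∈ Submonoid.closure M := by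
          intro q
          rw [mul_one, ← apow_add, show q + (n - 1) * q = n * q by
            obtain ⟨m, rfl⟩ := Nat.exists_eq_add_of_le hn
            simp only [Nat.add_sub_cancel_left]; ring]
          exact apow_mul_mem han q
        have h0 : ∀ q : ℕ, (n - 1) * q + q ≡ 0 [MOD n] := by
          intro q
          rw [show (n - 1) * q + q = n * q by
            obtain ⟨m, rfl⟩ := Nat.exists_eq_add_of_le hn
            simp only [Nat.add_sub_cancel_left]; ring]
          exact Nat.modEq_zero_iff_dvd.2 (dvd_mul_right n q)
        obtain ⟨e1, e2⟩ := hborder 1 p q p' q' q _ q' _ hp hq hp' hq' (hm q) (hm q') h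
          ((h0 q).trans (h0 q').symm)
        rw [e1, e2]
      · intro k hk
        obtain ⟨p, hp, q, hq, e⟩ := hsum k hk
        exact ⟨(p, q), ⟨hp, hq⟩, by simp only [← e]; exact Nat.mod_eq_of_lt hk⟩
    rw [← Set.ncard_prod, ← hbij.injOn.ncard_image, hbij.image_eq,
      ← Nat.card_coe_set_eq]
    simp
  · exact hsum
  · rintro ω ⟨c, d⟩
    obtain ⟨K, hK⟩ := (hPfin.image FreeMonoid.length).bddAbove
    obtain ⟨L, hL⟩ := (hSfin.image FreeMonoid.length).bddAbove
    have : NeZero n := ⟨by omega⟩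
    -- Representatives of `c` and `d` exceeding the lengths of all words of `P` and `S`.
    have hrep : ∀ (c : ZMod n) (K : ℕ), ∃ k : ℕ, K ≤ k ∧ (k : ZMod n) = c := fun c K =>
      ⟨c.val + n * K, by nlinarith [Nat.zero_le c.val], by simp⟩
    obtain ⟨k, hk, rfl⟩ := hrep c K
    obtain ⟨l, hl, rfl⟩ := hrep d L
    obtain ⟨⟨p, m, s⟩, ⟨hp, hm, hs, e⟩, -⟩ := hfact (apow a k * ω * apow a l)
    have hpk : p.length ≤ k := (hK ⟨p, hp, rfl⟩).trans hk
    have hsl : s.length ≤ l := (hL ⟨s, hs, rfl⟩).trans hl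
    obtain ⟨hpa, hsa, hma⟩ := split_apow a k l ω p m s e hpk hsl
    simp only at hp hm hs
    rw [hpa] at hp
    rw [hsa] at hs
    rw [hma] at hm
    refine ⟨((p.length : ℤ), ((k - p.length) % n, (l - s.length) % n), (s.length : ℤ)),
      ⟨⟨_, hp, rfl⟩, ⟨_, _, hm, rfl⟩, ⟨_, hs, rfl⟩, ?_, ?_⟩, ?_⟩
    · simp [Nat.cast_sub hpk]
    · simp [Nat.cast_sub hsl]
    · rintro ⟨_, ⟨i, j⟩, _⟩ ⟨⟨p', hp', rfl⟩, ⟨I, J, hIJ, hb⟩, ⟨q', hq', rfl⟩, h1, h2⟩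
      obtain ⟨rfl, rfl⟩ := bay_inj hab hb
      simp only [Int.cast_natCast, ZMod.natCast_mod] at h1 h2
      rw [← Nat.cast_add, ZMod.natCast_eq_natCast_iff] at h1 h2
      have h1' : p' + I ≡ p.length + (k - p.length) [MOD n] := by
        rwa [Nat.add_sub_cancel' hpk]
      have h2' : J + q' ≡ (l - s.length) + s.length [MOD n] := by
        rwa [Nat.sub_add_cancel hsl]
      obtain ⟨rfl, rfl⟩ := hborder ω p' q' p.length s.length I J _ _ hp' hq' hp hs hIJ hm h1' h2'
      have h3 : I % n = (k - p.length) % n := Nat.ModEq.add_left_cancel' _ h1'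
      have h4 : J % n = (l - s.length) % n := Nat.ModEq.add_right_cancel' _ h2'
      rw [h3, h4]

end CBC
end

section
/- With the notation of the context, both (L, R_1) and (L, R_2) are factorizations of size n = p_1 p_2 q_1 q_2. -/
/-!
The pair `(L, R₁)` is a mixed-radix numeration system modulo `n = p₁ p₂ q₁ q₂`. An integer `x` can
be written, uniquely up to a multiple of `n`, as
`x = q₁ q₂ v + p₁ (t + p₂ (u + q₁ s))` with `v < p₁`, `t < p₂`, `u < q₁`, `s < q₂`:
since `q₁ q₂` is invertible modulo `p₁`, the digit `v` is determined by `x` modulo `p₁`, and then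
`t`, `u`, `s` are the successive digits of `(x - q₁ q₂ v) / p₁` in the bases `p₂`, `q₁`, `q₂`.
Splitting this sum as `(p₁ p₂ u + q₁ q₂ v) + (p₁ p₂ q₁ s + p₁ t)` gives an element of `L` plus an
element of `R₁`. Existence is `exists_digits`, uniqueness is `digits_unique`.

Exchanging `(p₁, p₂)` with `(q₁, q₂)` preserves `L` and turns `R₁` into `R₂`, so the second
factorization is an instance of the first; `isFactorization_aux` therefore allows any modulus equal
to `a b c d`.
-/

namespace CBC

variable {A : Type*}

/-- `n = p₁ p₂ q₁ q₂` -/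
def ceN (p₁ p₂ q₁ q₂ : ℕ) : ℕ := p₁ * p₂ * q₁ * q₂

/-- `L = p₁p₂[q₁) + q₁q₂[p₁)` in `ZMod n` -/
def ceL (p₁ p₂ q₁ q₂ : ℕ) : Set (ZMod (ceN p₁ p₂ q₁ q₂)) :=
  { x | ∃ u < q₁, ∃ v < p₁,
      x = ((p₁ * p₂ * u + q₁ * q₂ * v : ℕ) : ZMod (ceN p₁ p₂ q₁ q₂)) }

/-- `R₁ = p₁p₂q₁[q₂) + p₁[p₂)` in `ZMod n` -/
def ceR₁ (p₁ p₂ q₁ q₂ : ℕ) : Set (ZMod (ceN p₁ p₂ q₁ q₂)) :=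
  { x | ∃ u < q₂, ∃ v < p₂,
      x = ((p₁ * p₂ * q₁ * u + p₁ * v : ℕ) : ZMod (ceN p₁ p₂ q₁ q₂)) }

/-- `R₂ = p₁q₁q₂[p₂) + q₁[q₂)` in `ZMod n` -/
def ceR₂ (p₁ p₂ q₁ q₂ : ℕ) : Set (ZMod (ceN p₁ p₂ q₁ q₂)) :=
  { x | ∃ u < p₂, ∃ v < q₂,
      x = ((p₁ * q₁ * q₂ * u + q₁ * v : ℕ) : ZMod (ceN p₁ p₂ q₁ q₂)) }

lemma eq_of_dvd_sub {m u u' : ℕ} (hu : u < m) (hu' : u' < m) (h : (m : ℤ) ∣ (u : ℤ) - u') :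
    u = u' :=
  (((Nat.modEq_iff_dvd).2 h).eq_of_lt_of_lt hu' hu).symm

/-- The digits are recovered one at a time, in the order `v`, `t`, `u`, `s`: `v` from the residue
modulo `a`, and each later one from the residue modulo its own base (`b`, `c`, `d`) once the earlier
digits and bases have been cancelled. -/
lemma digits_unique {a b c d : ℕ} (ha : 0 < a) (hb : 0 < b) (hc : 0 < c)
    (h : Nat.Coprime (c * d) a) {u v s t u' v' s' t' : ℕ}
    (hu : u < c) (hv : v < a) (hs : s < d) (ht : t < b)
    (hu' : u' < c) (hv' : v' < a) (hs' : s' < d) (ht' : t' < b)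
    (hk : ((a * b * c * d : ℕ) : ℤ) ∣
      ((a * b * u + c * d * v + (a * b * c * s + a * t) : ℕ) : ℤ) -
        ((a * b * u' + c * d * v' + (a * b * c * s' + a * t') : ℕ) : ℤ)) :
    u = u' ∧ v = v' ∧ s = s' ∧ t = t' := by
  have ha0 : (a : ℤ) ≠ 0 := by exact_mod_cast ha.ne'
  have hb0 : (b : ℤ) ≠ 0 := by exact_mod_cast hb.ne'
  have hc0 : (c : ℤ) ≠ 0 := by exact_mod_cast hc.ne'
  obtain ⟨k, hk⟩ := hk
  push_cast at hk
  have hvv : v = v' := by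
    refine eq_of_dvd_sub hv hv' ?_
    have hco : IsCoprime (a : ℤ) ((c : ℤ) * d) := by
      have := (Nat.isCoprime_iff_coprime.2 h).symm
      exact_mod_cast this
    refine hco.dvd_of_dvd_mul_left
      ⟨b * c * d * k - b * (u - u') - (b * c * (s - s') + (t - t')), ?_⟩
    linear_combination hk
  subst hvv
  have hk1 : (b : ℤ) * u + b * c * s + t - (b * u' + b * c * s' + t') = b * c * d * k :=
    mul_left_cancel₀ ha0 (by linear_combination hk)
  have htt : t = t' := by
    refine eq_of_dvd_sub ht ht' ⟨c * d * k - (u - u') - c * (s - s'), ?_⟩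
    linear_combination hk1
  subst htt
  have hk2 : (u : ℤ) + c * s - (u' + c * s') = c * d * k :=
    mul_left_cancel₀ hb0 (by linear_combination hk1)
  have huu : u = u' := by
    refine eq_of_dvd_sub hu hu' ⟨d * k - (s - s'), ?_⟩
    linear_combination hk2
  subst huu
  have hss : s = s' := by
    refine eq_of_dvd_sub hs hs' ⟨k, ?_⟩
    exact mul_left_cancel₀ hc0 (by linear_combination hk2)
  exact ⟨rfl, rfl, hss, rfl⟩

lemma exists_eq_mul_add {m : ℕ} (hm : 0 < m) (x : ℤ) :
    ∃ r < m, ∃ y : ℤ, x = m * y + (r : ℕ) := by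
  have hm' : (0 : ℤ) < m := by exact_mod_cast hm
  have h0 := Int.emod_nonneg x hm'.ne'
  have h1 := Int.emod_lt_of_pos x hm'
  refine ⟨(x % m).toNat, by omega, x / m, ?_⟩
  rw [Int.toNat_of_nonneg h0]
  exact (Int.mul_ediv_add_emod x m).symm

lemma exists_digits {a b c d : ℕ} (ha : 0 < a) (hb : 0 < b) (hc : 0 < c) (hd : 0 < d)
    (h : Nat.Coprime (c * d) a) (x : ℤ) :
    ∃ u < c, ∃ v < a, ∃ s < d, ∃ t < b, ∃ k : ℤ,
      x = ((a * b * u + c * d * v + (a * b * c * s + a * t) : ℕ) : ℤ) +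
        ((a * b * c * d : ℕ) : ℤ) * k := by
  obtain ⟨e, f, hef⟩ := Nat.isCoprime_iff_coprime.2 h
  -- `e` inverts `c * d` modulo `a`, so `v` must be the residue of `x * e`.
  obtain ⟨v, hv, w, hw⟩ := exists_eq_mul_add ha (x * e)
  obtain ⟨t, ht, z, hz⟩ := exists_eq_mul_add hb (x * f + c * d * w)
  obtain ⟨u, hu, y, hy⟩ := exists_eq_mul_add hc z
  obtain ⟨s, hs, k, hk⟩ := exists_eq_mul_add hd y
  refine ⟨u, hu, v, hv, s, hs, t, ht, k, ?_⟩
  push_cast at hef ⊢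
  linear_combination (-x) * hef + (c * d : ℤ) * hw + (a : ℤ) * hz + (a * b : ℤ) * hy +
    (a * b * c : ℤ) * hk

lemma isFactorization_aux {a b c d N : ℕ} (ha : 0 < a) (hb : 0 < b) (hc : 0 < c) (hd : 0 < d)
    (h : Nat.Coprime (c * d) a) (hN : N = a * b * c * d) :
    IsFactorization N
      {x | ∃ u < c, ∃ v < a, x = ((a * b * u + c * d * v : ℕ) : ZMod N)}
      {x | ∃ u < d, ∃ v < b, x = ((a * b * c * u + a * v : ℕ) : ZMod N)} := by
  subst hN
  intro x
  obtain ⟨x, rfl⟩ := ZMod.intCast_surjective x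
  obtain ⟨u, hu, v, hv, s, hs, t, ht, k, hx⟩ := exists_digits ha hb hc hd h x
  have hsum : ((a * b * u + c * d * v : ℕ) : ZMod (a * b * c * d)) +
      ((a * b * c * s + a * t : ℕ) : ZMod (a * b * c * d)) = (x : ZMod (a * b * c * d)) := by
    rw [hx, Int.cast_add, Int.cast_mul, Int.cast_natCast, Int.cast_natCast, ZMod.natCast_self,
      zero_mul, add_zero, Nat.cast_add (a * b * u + c * d * v)]
  refine ⟨(_, _), ⟨⟨u, hu, v, hv, rfl⟩, ⟨s, hs, t, ht, rfl⟩, hsum⟩, ?_⟩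
  rintro ⟨y, z⟩ ⟨⟨u', hu', v', hv', hy⟩, ⟨s', hs', t', ht', hz⟩, hyz⟩
  dsimp only at hy hz hyz
  subst hy hz
  rw [← hsum, ← Nat.cast_add, ← Nat.cast_add, ZMod.natCast_eq_natCast_iff,
    Nat.modEq_iff_dvd] at hyz
  obtain ⟨rfl, rfl, rfl, rfl⟩ :=
    digits_unique ha hb hc h hu hv hs ht hu' hv' hs' ht' hyz
  rfl

theorem statement16 (p₁ p₂ q₁ q₂ : ℕ)
    (hp₁ : p₁.Prime) (hp₂ : p₂.Prime) (hq₁ : q₁.Prime) (hq₂ : q₂.Prime)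
    (h₁ : Nat.Coprime (p₁ * p₂) q₁) (h₂ : Nat.Coprime (q₁ * q₂) p₁) :
    IsFactorization (ceN p₁ p₂ q₁ q₂) (ceL p₁ p₂ q₁ q₂) (ceR₁ p₁ p₂ q₁ q₂) ∧
    IsFactorization (ceN p₁ p₂ q₁ q₂) (ceL p₁ p₂ q₁ q₂) (ceR₂ p₁ p₂ q₁ q₂) := by
  refine ⟨isFactorization_aux hp₁.pos hp₂.pos hq₁.pos hq₂.pos h₂ rfl, ?_⟩
  have hN : ceN p₁ p₂ q₁ q₂ = q₁ * q₂ * p₁ * p₂ := by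
    unfold ceN; ring
  convert isFactorization_aux hq₁.pos hq₂.pos hp₁.pos hp₂.pos h₁ hN using 1
  · ext x
    constructor
    · rintro ⟨u, hu, v, hv, rfl⟩
      exact ⟨v, hv, u, hu, by rw [add_comm]⟩
    · rintro ⟨u, hu, v, hv, rfl⟩
      exact ⟨v, hv, u, hu, by rw [add_comm]⟩
  · have hc : p₁ * q₁ * q₂ = q₁ * q₂ * p₁ := by ring
    simp only [ceR₂, hc]

end CBC
end
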